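/- Fillmore's Theorem: Let A be a nonscalar n×n matrix over a field F and let γ₁, ..., γₙ ∈ F satisfy γ₁ + ⋯ + γₙ = tr(A). Then there exists a matrix B similar to A over F whose diagonal entries are exactly (γ₁, ..., γₙ). -/

import Mathlib

namespace Matrix

variable {F ι κ υ : Type*} [Field F] [Fintype ι] [DecidableEq ι] [Fintype κ] [DecidableEq κ]

theorem isConj_of_mul_eq {A B P : Matrix ι ι F} (hP : IsUnit P) (h : P * A = B * P) :
    IsConj A B := by
  obtain ⟨u, rfl⟩ := hP
  exact ⟨u, h⟩

theorem trace_eq_of_isConj {A B : Matrix ι ι F} (h : IsConj A B) : A.trace = B.trace := by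
  obtain ⟨u, hu⟩ := h
  have hB : B = u.val * A * u⁻¹.val := by
    rw [hu.eq, mul_assoc, Units.mul_inv, mul_one]
  rw [hB, trace_units_conj]

/-- A nonscalar matrix is similar to one with a nonzero off-diagonal entry. -/
theorem exists_isConj_offDiag_ne_zero [Nonempty ι] {A : Matrix ι ι F}
    (hA : ∀ c : F, A ≠ c • (1 : Matrix ι ι F)) :
    ∃ B, IsConj A B ∧ ∃ i j, i ≠ j ∧ B i j ≠ 0 := by
  by_cases hoff : ∃ i j, i ≠ j ∧ A i j ≠ 0
  · exact ⟨A, IsConj.refl A, hoff⟩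
  push Not at hoff
  obtain ⟨j⟩ := ‹Nonempty ι›
  obtain ⟨i, hi⟩ : ∃ i, A i i ≠ A j j := by
    by_contra! h
    refine hA (A j j) ?_
    ext k l
    by_cases hkl : k = l
    · subst hkl
      simp [h k]
    · simp [hkl, hoff k l hkl]
  have hij : i ≠ j := by
    rintro rfl
    exact hi rfl
  refine ⟨A + (A j j - A i i) • single i j 1,
    isConj_of_mul_eq (P := transvection i j 1) ?_ ?_, i, j, hij, ?_⟩
  · rw [isUnit_iff_isUnit_det, det_transvection_of_ne i j hij]
    exact isUnit_one
  · have hd : A = diagonal fun k => A k k := by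
      ext k l
      by_cases hkl : k = l
      · simp [hkl]
      · simp [hkl, hoff k l hkl]
    have h₁ : single i j (1 : F) * A = A j j • single i j 1 := by
      rw [hd]
      ext k l
      by_cases hl : j = l <;> simp [single_apply, hl]
    have h₂ : A * single i j (1 : F) = A i i • single i j 1 := by
      rw [hd]
      ext k l
      by_cases hk : i = k <;> simp [single_apply, hk]
    rw [transvection, add_mul, mul_add, add_mul _ _ (single i j 1), h₁, h₂, smul_mul_assoc,
      single_mul_single_of_ne (h := hij.symm), one_mul, mul_one]
    module
  · simpa [hoff i j hij, sub_eq_zero] using hi.symm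

section Blocks

variable [Unique υ] [Fintype υ] [DecidableEq υ]

theorem exists_row_mul_col_eq {e : Matrix κ υ F} {i : κ} (he : e i default ≠ 0) (g : F)
    (D : Matrix κ κ F) :
    ∃ x : Matrix υ κ F, (x * e) default default = g ∧
      (Fintype.card κ = 1 ∨ ∀ c : F, D - e * x ≠ c • (1 : Matrix κ κ F)) := by
  have hx : (single default i (g / e i default) * e : Matrix υ υ F) default default = g := by
    simp [he]
  set x : Matrix υ κ F := single default i (g / e i default)
  by_cases hκ : ∀ k, k = i
  · exact ⟨x, hx, Or.inl (Fintype.card_eq_one_iff.mpr ⟨i, hκ⟩)⟩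
  push Not at hκ
  obtain ⟨k, hk⟩ := hκ
  by_cases hD : ∀ c : F, D - e * x ≠ c • (1 : Matrix κ κ F)
  · exact ⟨x, hx, Or.inr hD⟩
  push Not at hD
  obtain ⟨c, hc⟩ := hD
  set z : Matrix υ κ F := single default k 1 - single default i (e k default / e i default) with hz
  refine ⟨x + z, ?_, Or.inr fun c' hc' => he ?_⟩
  · rw [Matrix.add_mul, add_apply, hx]
    simp [hz, Matrix.sub_mul, he]
  · rw [Matrix.mul_add, ← sub_sub, hc] at hc'
    have := congrFun (congrFun hc' i) k
    simpa [hk.symm, hk, hz, mul_apply, single_apply] using this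

/-- Conjugating by a block-unitriangular matrix adjusts the upper-left entry at will, and the
lower-right block can be kept nonscalar. -/
theorem exists_isConj_fromBlocks {a : Matrix υ υ F} {b : Matrix υ κ F}
    {e : Matrix κ υ F} {D : Matrix κ κ F} {i : κ} (he : e i default ≠ 0) (g : F) :
    ∃ a' b' D', IsConj (fromBlocks a b e D) (fromBlocks a' b' e D') ∧ a' default default = g ∧
      (Fintype.card κ = 1 ∨ ∀ c : F, D' ≠ c • (1 : Matrix κ κ F)) := by
  obtain ⟨x, hx, hD⟩ := exists_row_mul_col_eq he (g - a default default) D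
  refine ⟨a + x * e, b + x * D - (a + x * e) * x, D - e * x,
    isConj_of_mul_eq (P := fromBlocks 1 x 0 1) ?_ ?_, ?_, hD⟩
  · rw [isUnit_iff_isUnit_det, det_fromBlocks_zero₂₁]
    simp
  · simp [fromBlocks_multiply]
  · simp [hx]

end Blocks

theorem isConj_fromBlocks_of_isConj [Fintype υ] [DecidableEq υ] (a : Matrix υ υ F)
    (b : Matrix υ κ F) (e : Matrix κ υ F) {D D' : Matrix κ κ F} (h : IsConj D D') :
    ∃ b' e', IsConj (fromBlocks a b e D) (fromBlocks a b' e' D') := by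
  obtain ⟨u, hu⟩ := h
  refine ⟨b * u⁻¹.val, u.val * e, isConj_of_mul_eq (P := fromBlocks 1 0 0 u.val) ?_ ?_⟩
  · rw [isUnit_iff_isUnit_det, det_fromBlocks_zero₂₁, det_one, one_mul,
      ← isUnit_iff_isUnit_det]
    exact u.isUnit
  · simp only [fromBlocks_multiply, Matrix.mul_assoc, Units.inv_mul]
    simp [hu.eq]

/-- **Fillmore's theorem** for matrices indexed by an arbitrary finite type. -/
theorem exists_isConj_diag_eq (n : ℕ) : ∀ {ι : Type*} [Fintype ι] [DecidableEq ι],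
    Fintype.card ι = n + 1 → ∀ A : Matrix ι ι F,
    (Fintype.card ι = 1 ∨ ∀ c : F, A ≠ c • (1 : Matrix ι ι F)) →
    ∀ γ : ι → F, ∑ i, γ i = A.trace → ∃ B, IsConj A B ∧ ∀ i, B i i = γ i := by
  induction n with
  | zero =>
    intro ι _ _ hι A _ γ hγ
    obtain ⟨i, hi⟩ := Fintype.card_eq_one_iff.mp hι
    let _ : Unique ι := ⟨⟨i⟩, hi⟩
    refine ⟨A, IsConj.refl A, fun k => ?_⟩
    rw [Unique.eq_default k]
    simpa [trace] using hγ.symm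
  | succ n ih =>
    intro ι _ _ hι A hA γ hγ
    replace hA := hA.resolve_left (by lia)
    have : Nonempty ι := Fintype.card_pos_iff.mp (by lia)
    obtain ⟨B, hAB, i, j, hij, hB⟩ := exists_isConj_offDiag_ne_zero hA
    rw [trace_eq_of_isConj hAB] at hγ
    let σ := Equiv.sumCompl (· = j)
    have hκ : Fintype.card {k // ¬ k = j} = n + 1 := by
      rw [Fintype.card_subtype_compl, hι]
      simp
    obtain ⟨a, b, D, hconj, ha, hD⟩ := exists_isConj_fromBlocks
      (a := (B.submatrix σ σ).toBlocks₁₁) (b := (B.submatrix σ σ).toBlocks₁₂)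
      (e := (B.submatrix σ σ).toBlocks₂₁) (D := (B.submatrix σ σ).toBlocks₂₂)
      (i := ⟨i, hij⟩) hB (γ j)
    rw [fromBlocks_toBlocks] at hconj
    have htr : ∑ k : {k // ¬ k = j}, γ k = D.trace := by
      have h := trace_eq_of_isConj hconj
      have hσ : (B.submatrix σ σ).trace = B.trace := Equiv.sum_comp σ fun k => B k k
      rw [hσ, ← hγ, trace, ← Equiv.sum_comp σ, Fintype.sum_sum_type, Fintype.sum_sum_type] at h
      have hj : γ (σ (Sum.inl default)) = a default default := ha.symm
      simp only [Fintype.sum_unique, hj, diag_apply, fromBlocks_apply₁₁] at h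
      exact add_left_cancel h
    obtain ⟨D', hDD', hγD⟩ := ih hκ D hD _ htr
    obtain ⟨b', e', hconj'⟩ := isConj_fromBlocks_of_isConj a b (B.submatrix σ σ).toBlocks₂₁ hDD'
    refine ⟨(fromBlocks a b' e' D').submatrix σ.symm σ.symm, hAB.trans ?_, ?_⟩
    · have h := (reindexAlgEquiv F F σ).toMonoidHom.map_isConj (hconj.trans hconj')
      simpa using h
    · intro k
      obtain ⟨s, rfl⟩ := σ.surjective k
      rcases s with s | s
      · obtain rfl := Unique.eq_default s
        rw [submatrix_apply, Equiv.symm_apply_apply]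
        exact ha
      · simpa [σ] using hγD s

end Matrix

theorem stmt_3 {F : Type*} [Field F] {n : ℕ} (hn : 2 ≤ n)
    (A : Matrix (Fin n) (Fin n) F)
    (hA : ∀ c : F, A ≠ c • (1 : Matrix (Fin n) (Fin n) F))
    (γ : Fin n → F) (hγ : ∑ i, γ i = A.trace) :
    ∃ P : (Matrix (Fin n) (Fin n) F)ˣ, ∀ i, (P.val * A * P⁻¹.val) i i = γ i := by
  obtain ⟨B, ⟨P, hP⟩, hB⟩ := Matrix.exists_isConj_diag_eq (n - 1)
    (by rw [Fintype.card_fin]; lia) A (Or.inr hA) γ hγ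
  refine ⟨P, fun i => ?_⟩
  rw [hP.eq, mul_assoc, Units.mul_inv, mul_one, hB]
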